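/- Let G be a weighted marked graph over R and let v, w be unlooped twin vertices of G that are adjacent to each other, with v unmarked and w marked. Let (G − w)' be the weighted marked graph obtained from G − w by changing the weights of v to α'(v) = α(v)α(w) and β'(v) = α(v)β(w) + β(v)α(w) + β(v)β(w)·d (v remaining unmarked). Then [G] = [(G − w)']. -/

import Mathlib

/-!
The sum over `T` is grouped according to `t = T \ {v, w}`, and the four terms with given `t` are
compared with the two terms `t`, `t ∪ {v}` of the bracket of `(G - w)'`.

If `w ∉ T`, then `w` is marked with diagonal entry `0`, so its row and column are deleted from
`𝒜(G)_T`, leaving `𝒜(G - w)_T` (`WMG.nullity_delete`). For `T = t ∪ {w}` the equations of rows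
`v` and `w` of the kernel differ by `x v = 0`, and moving the coordinate `x w` to position `v`
gives the kernel for `t ∪ {v}` (`WMG.nullity_insert_w`). For `T = t ∪ {v, w}` the rows and columns
of `v` and `w` coincide, so the nullity is one more than for `t ∪ {v}`
(`WMG.nullity_insert_both`). The weights of these terms add up to `α'(v)` and `β'(v)`.

Over `GF(2)` the kernel has `2 ^ ν` elements (`WMG.card_sol`), so nullities are compared through
bijections between solution sets, all taken inside `V → ZMod 2`.
-/

/-- A weighted marked graph over `R` with vertex type `V`: a symmetric adjacency
matrix over `GF(2)` (diagonal entries record loops), a finite set of marked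
vertices, weight functions `alpha` and `beta`, and a number `phi` of free loops. -/
structure WMG (R : Type*) (V : Type*) where
  adj : Matrix V V (ZMod 2)
  symm : adj.IsSymm
  marked : Finset V
  alpha : V → R
  beta : V → R
  phi : ℕ

namespace WMG

variable {R : Type*} {V : Type*}

/-- The matrix `𝒜(G)` with the diagonal entries at vertices of `T` toggled. -/
def adjT [DecidableEq V] (G : WMG R V) (T : Finset V) : Matrix V V (ZMod 2) :=
  Matrix.of fun i j => G.adj i j + if i = j ∧ i ∈ T then 1 else 0

/-- The vertices whose rows and columns survive in `𝒜(G)_T`: all vertices except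
marked ones whose toggled diagonal entry is `0`. -/
def keep [Fintype V] [DecidableEq V] (G : WMG R V) (T : Finset V) : Finset V :=
  Finset.univ.filter fun x => ¬(x ∈ G.marked ∧ G.adjT T x x = 0)

/-- The `GF(2)`-nullity of `𝒜(G)_T` (number of columns minus rank). -/
noncomputable def nullity [Fintype V] [DecidableEq V] (G : WMG R V) (T : Finset V) : ℕ :=
  Fintype.card {x // x ∈ G.keep T} -
    ((G.adjT T).submatrix (fun i : {x // x ∈ G.keep T} => i.1)
      (fun j : {x // x ∈ G.keep T} => j.1)).rank

/-- The weighted marked-graph bracket polynomial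
`[G] = d^φ · Σ_T (∏_{v ∉ T} α v) (∏_{t ∈ T} β t) d^{ν(𝒜(G)_T)}`. -/
noncomputable def bracket [CommRing R] [Fintype V] [DecidableEq V]
    (G : WMG R V) (d : Rˣ) : R :=
  (d : R) ^ G.phi *
    ∑ T : Finset V,
      (∏ x ∈ Tᶜ, G.alpha x) * (∏ t ∈ T, G.beta t) * (d : R) ^ G.nullity T

/-- Deletion of a set `S` of vertices (with all incident edges); all other data
unchanged. -/
def delete [DecidableEq V] (G : WMG R V) (S : Finset V) : WMG R {x : V // x ∉ S} where
  adj := G.adj.submatrix Subtype.val Subtype.val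
  symm := G.symm.submatrix Subtype.val
  marked := G.marked.subtype fun x => x ∉ S
  alpha := fun x => G.alpha x.1
  beta := fun x => G.beta x.1
  phi := G.phi

/-- Change the weights of the vertex `a` to `x` and `y`. -/
def reweight [DecidableEq V] (G : WMG R V) (a : V) (x y : R) : WMG R V :=
  { G with alpha := Function.update G.alpha a x, beta := Function.update G.beta a y }

/-- Mark the vertex `a` and change its weights to `x` and `y`. -/
def markReweight [DecidableEq V] (G : WMG R V) (a : V) (x y : R) : WMG R V :=
  { G with marked := insert a G.marked,
           alpha := Function.update G.alpha a x,
           beta := Function.update G.beta a y }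

/-- The composition `F ∗ H` of two weighted marked graphs along the vertices
`aF` and `aH` (thought of as a single shared vertex `a`): the vertex set is the
disjoint union of `V(F) \ {a}` and `V(H) \ {a}`; loops, marks and weights are
inherited; two vertices are adjacent iff they are adjacent in `F`, or in `H`,
or one is a neighbor of `a` in `F` and the other is a neighbor of `a` in `H`;
free loops add. -/
def comp {VF VH : Type*} [DecidableEq VF] [DecidableEq VH]
    (F : WMG R VF) (H : WMG R VH) (aF : VF) (aH : VH) :
    WMG R ({x : VF // x ≠ aF} ⊕ {y : VH // y ≠ aH}) where
  adj := Matrix.of fun p q =>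
    match p, q with
    | Sum.inl x, Sum.inl x' => F.adj x.1 x'.1
    | Sum.inl x, Sum.inr y => F.adj x.1 aF * H.adj aH y.1
    | Sum.inr y, Sum.inl x => F.adj x.1 aF * H.adj aH y.1
    | Sum.inr y, Sum.inr y' => H.adj y.1 y'.1
  symm := by
    refine Matrix.ext fun p q => ?_
    rcases p with x | y <;> rcases q with x' | y'
    · exact F.symm.apply x.1 x'.1
    · rfl
    · rfl
    · exact H.symm.apply y.1 y'.1
  marked := (F.marked.subtype fun x => x ≠ aF).disjSum (H.marked.subtype fun y => y ≠ aH)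
  alpha := Sum.elim (fun x => F.alpha x.1) (fun y => H.alpha y.1)
  beta := Sum.elim (fun x => F.beta x.1) (fun y => H.beta y.1)
  phi := F.phi + H.phi

/-- The universal property of Theorem `pjoin` for `F` and `a`, with candidate
weights `A = α'(a)`, `B = β'(a)`, `Am = α'(a_m)`: for every weighted marked
graph `H` sharing exactly the unlooped unmarked vertex `a` with `F`, in which
no neighbor of `a` is marked, `[F ∗ H] = [H'] + [H'_m]`. -/
def UnivProp {R : Type*} [CommRing R] {VF : Type u_v} [Fintype VF] [DecidableEq VF]
    (d : Rˣ) (F : WMG R VF) (a : VF) (A B Am : R) : Prop :=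
  ∀ (VH : Type u_v) [Fintype VH] [DecidableEq VH] (H : WMG R VH) (aH : VH),
    H.adj aH aH = 0 → aH ∉ H.marked →
    (∀ y : VH, H.adj aH y = 1 → y ∉ H.marked) →
    (F.comp H a aH).bracket d =
      (H.reweight aH A B).bracket d + (H.markReweight aH Am 0).bracket d

/-- The local complement `G^v`: toggle all entries of the adjacency matrix
(including diagonal ones) between members of the open neighborhood of `v`. -/
def localComp [DecidableEq V] (G : WMG R V) (v : V) : WMG R V where
  adj := Matrix.of fun a b =>
    G.adj a b + if (a ≠ v ∧ G.adj v a = 1) ∧ (b ≠ v ∧ G.adj v b = 1) then 1 else 0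
  symm := by
    refine Matrix.ext fun a b => ?_
    have h : ((b ≠ v ∧ G.adj v b = 1) ∧ (a ≠ v ∧ G.adj v a = 1)) ↔
        ((a ≠ v ∧ G.adj v a = 1) ∧ (b ≠ v ∧ G.adj v b = 1)) := and_comm
    simp only [Matrix.transpose_apply, Matrix.of_apply]
    rw [G.symm.apply a b, if_congr h rfl rfl]
  marked := G.marked
  alpha := G.alpha
  beta := G.beta
  phi := G.phi

/-- The condition for the pivot `G^{vw}` to toggle the adjacency between `a`
and `b`: `a` and `b` are distinct and (in one order or the other) `a ∈ N(v)`,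
`b ∈ N(w)`, and `a ∉ N(w)` or `b ∉ N(v)`. -/
def pivCond [DecidableEq V] (G : WMG R V) (v w a b : V) : Prop :=
  a ≠ b ∧
    (((a ≠ v ∧ G.adj v a = 1) ∧ (b ≠ w ∧ G.adj w b = 1) ∧
        (¬(a ≠ w ∧ G.adj w a = 1) ∨ ¬(b ≠ v ∧ G.adj v b = 1))) ∨
     ((b ≠ v ∧ G.adj v b = 1) ∧ (a ≠ w ∧ G.adj w a = 1) ∧
        (¬(b ≠ w ∧ G.adj w b = 1) ∨ ¬(a ≠ v ∧ G.adj v a = 1))))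

instance pivCond_decidable [DecidableEq V] (G : WMG R V) (v w a b : V) :
    Decidable (pivCond G v w a b) := by
  unfold pivCond; infer_instance

lemma pivCond_comm [DecidableEq V] (G : WMG R V) (v w a b : V) :
    pivCond G v w a b ↔ pivCond G v w b a := by
  unfold pivCond
  constructor <;> rintro ⟨h1, h2⟩ <;> exact ⟨Ne.symm h1, h2.symm⟩

/-- The pivot `G^{vw}`. -/
def pivot [DecidableEq V] (G : WMG R V) (v w : V) : WMG R V where
  adj := Matrix.of fun a b => G.adj a b + if pivCond G v w a b then 1 else 0
  symm := by
    refine Matrix.ext fun a b => ?_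
    simp only [Matrix.transpose_apply, Matrix.of_apply]
    rw [G.symm.apply a b, if_congr (pivCond_comm G v w b a) rfl rfl]
  marked := G.marked
  alpha := G.alpha
  beta := G.beta
  phi := G.phi

/-- The marked pivot `G_c^{vw}`: perform the pivot `G^{vw}`, then interchange
the neighborhoods of `v` and `w` (leaving loops unchanged) and toggle the
marks on `v` and `w`. -/
def markedPivot [DecidableEq V] (G : WMG R V) (v w : V) : WMG R V where
  adj := Matrix.of fun a b =>
    if a = b then (G.pivot v w).adj a b
    else (G.pivot v w).adj (Equiv.swap v w a) (Equiv.swap v w b)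
  symm := by
    refine Matrix.ext fun a b => ?_
    simp only [Matrix.transpose_apply, Matrix.of_apply]
    by_cases h : a = b
    · subst h; simp
    · rw [if_neg fun hh => h hh.symm, if_neg h]
      exact (G.pivot v w).symm.apply _ _
  marked := (G.marked \ {v, w}) ∪ (({v, w} : Finset V) \ G.marked)
  alpha := G.alpha
  beta := G.beta
  phi := G.phi

/-- The bordered version of `𝒜(F − a)_T`: adjoin the row and column recording
adjacency to `a` in `F`, with corner entry `c`; `borderedNullity` is its
`GF(2)`-nullity. -/
noncomputable def borderedNullity {VF : Type*} [Fintype VF] [DecidableEq VF]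
    (F : WMG R VF) (a : VF) (T : Finset {x : VF // x ∉ ({a} : Finset VF)})
    (c : ZMod 2) : ℕ :=
  Fintype.card (Option {x // x ∈ (F.delete {a}).keep T}) -
    (Matrix.of (fun p q =>
      match p, q with
      | some i, some j => (F.delete {a}).adjT T i.1 j.1
      | some i, none => F.adj i.1.1 a
      | none, some j => F.adj j.1.1 a
      | none, none => c) :
      Matrix (Option {x // x ∈ (F.delete {a}).keep T})
        (Option {x // x ∈ (F.delete {a}).keep T}) (ZMod 2)).rank

end WMG


namespace WMG

/-! ### The nullity as a count of solutions -/

/-- The kernel of `𝒜(G)_T`, extended by zero to all of `V`: vectors vanishing on the deleted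
vertices and satisfying the equations of the surviving rows. -/
def Sol {R V : Type*} [Fintype V] [DecidableEq V] (G : WMG R V) (T : Finset V)
    (x : V → ZMod 2) : Prop :=
  ∀ i, (i ∈ G.keep T → ∑ j, G.adjT T i j * x j = 0) ∧ (i ∉ G.keep T → x i = 0)

theorem card_sol {R V : Type*} [Fintype V] [DecidableEq V] (G : WMG R V) (T : Finset V) :
    Nat.card {x // G.Sol T x} = 2 ^ G.nullity T := by
  set M := (G.adjT T).submatrix (fun i : {x // x ∈ G.keep T} => i.1)
      (fun j : {x // x ∈ G.keep T} => j.1) with hM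
  have hn : G.nullity T = Module.finrank (ZMod 2) M.mulVecLin.ker := by
    have h := LinearMap.finrank_range_add_finrank_ker M.mulVecLin
    rw [Module.finrank_fintype_fun_eq_card] at h
    unfold nullity
    rw [← hM, Matrix.rank]
    omega
  have hc := Module.natCard_eq_pow_finrank (K := ZMod 2) (V := M.mulVecLin.ker)
  rw [Nat.card_zmod] at hc
  rw [hn, ← hc]
  have key : ∀ (x : V → ZMod 2), (∀ i ∉ G.keep T, x i = 0) → ∀ i : {x // x ∈ G.keep T},
      M.mulVec (fun j => x j.1) i = ∑ j, G.adjT T i j * x j := by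
    intro x hx i
    simp only [Matrix.mulVec, dotProduct, hM, Matrix.submatrix_apply]
    rw [Finset.sum_coe_sort (G.keep T) (fun j => G.adjT T i j * x j)]
    apply Finset.sum_subset (Finset.subset_univ _)
    intro j _ hj
    rw [hx j hj, mul_zero]
  refine Nat.card_congr
    { toFun := fun x => ⟨fun j => x.1 j.1, ?_⟩
      invFun := fun y => ⟨fun i => if h : i ∈ G.keep T then y.1 ⟨i, h⟩ else 0, ?_⟩
      left_inv := ?_
      right_inv := ?_ }
  · rw [LinearMap.mem_ker]
    ext i
    rw [Matrix.mulVecLin_apply, key x.1 (fun i hi => (x.2 i).2 hi) i]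
    exact (x.2 i).1 i.2
  · have h0 : ∀ i ∉ G.keep T, (fun i => if h : i ∈ G.keep T then y.1 ⟨i, h⟩ else 0) i = 0 :=
      fun i hi => dif_neg hi
    refine fun i => ⟨fun hi => ?_, h0 i⟩
    rw [← key _ h0 ⟨i, hi⟩]
    have hy := congrFun (LinearMap.mem_ker.1 y.2) ⟨i, hi⟩
    rw [Matrix.mulVecLin_apply] at hy
    simpa using hy
  · rintro ⟨x, hx⟩
    ext i
    by_cases hi : i ∈ G.keep T
    · simp [hi]
    · simp [hi, (hx i).2 hi]
  · rintro ⟨y, hy⟩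
    ext i
    simp

/-! ### The linear system at the twins -/

/-- The row sums of `𝒜(G)_T`, with the columns of `v` and `w` and the toggled diagonal entry
split off. -/
theorem sum_adjT {R V : Type*} [Fintype V] [DecidableEq V] (G : WMG R V) (T : Finset V)
    (x : V → ZMod 2) {v w : V} (hvw : v ≠ w) (i : V) :
    ∑ j, G.adjT T i j * x j = G.adj i v * x v + G.adj i w * x w
      + ∑ j ∈ (Finset.univ.erase w).erase v, G.adj i j * x j + if i ∈ T then x i else 0 := by
  have h1 : ∀ j, G.adjT T i j * x j = G.adj i j * x j + if i = j then (if i ∈ T then x i else 0)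
      else 0 := by
    intro j
    by_cases hij : i = j
    · subst hij
      by_cases hi : i ∈ T <;> simp [adjT, hi, add_mul]
    · simp [adjT, hij]
  simp_rw [h1]
  rw [Finset.sum_add_distrib, Finset.sum_ite_eq, if_pos (Finset.mem_univ _),
    ← Finset.add_sum_erase _ _ (Finset.mem_univ w),
    ← Finset.add_sum_erase _ _ (Finset.mem_erase.2 ⟨hvw, Finset.mem_univ v⟩)]
  ring

theorem mem_keep {R V : Type*} [Fintype V] [DecidableEq V] (G : WMG R V) (T : Finset V) (i : V) :
    i ∈ G.keep T ↔ ¬(i ∈ G.marked ∧ (G.adj i i + if i ∈ T then 1 else 0) = 0) := by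
  simp [keep, adjT]

/-- The system defining `Sol` for mixed adjacent unlooped twins `v`, `w`, with the equations at
`v` and `w` separated from those at the other vertices. -/
theorem sol_iff {R V : Type*} [Fintype V] [DecidableEq V] (G : WMG R V) {v w : V} (hvw : v ≠ w)
    (hloopv : G.adj v v = 0) (hloopw : G.adj w w = 0)
    (htwin : ∀ x : V, x ≠ v → x ≠ w → G.adj v x = G.adj w x)
    (hmv : v ∉ G.marked) (hmw : w ∈ G.marked) (hadj : G.adj v w = 1)
    (T : Finset V) (x : V → ZMod 2) :
    G.Sol T x ↔
      (x w + ∑ j ∈ (Finset.univ.erase w).erase v, G.adj v j * x j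
        + (if v ∈ T then x v else 0) = 0) ∧
      (if w ∈ T then x v + ∑ j ∈ (Finset.univ.erase w).erase v, G.adj v j * x j + x w = 0
        else x w = 0) ∧
      ∀ i, i ≠ v → i ≠ w →
        (¬(i ∈ G.marked ∧ (G.adj i i + if i ∈ T then 1 else 0) = 0) →
          G.adj v i * (x v + x w) + ∑ j ∈ (Finset.univ.erase w).erase v, G.adj i j * x j
            + (if i ∈ T then x i else 0) = 0) ∧
        ((i ∈ G.marked ∧ (G.adj i i + if i ∈ T then 1 else 0) = 0) → x i = 0) := by
  have hwv : G.adj w v = 1 := by rw [G.symm.apply v w, hadj]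
  have hS : ∑ j ∈ (Finset.univ.erase w).erase v, G.adj w j * x j =
      ∑ j ∈ (Finset.univ.erase w).erase v, G.adj v j * x j := by
    refine Finset.sum_congr rfl fun j hj => ?_
    simp only [Finset.mem_erase, Finset.mem_univ, and_true] at hj
    rw [htwin j hj.1 hj.2]
  have hi : ∀ i, i ≠ v → i ≠ w → G.adj i v * x v + G.adj i w * x w =
      G.adj v i * (x v + x w) := by
    intro i h1 h2
    rw [G.symm.apply v i, G.symm.apply w i, htwin i h1 h2]
    ring
  unfold Sol
  simp only [mem_keep, sum_adjT G T x hvw, not_not]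
  constructor
  · intro h
    refine ⟨?_, ?_, fun i h1 h2 => ?_⟩
    · simpa [hmv, hloopv, hadj] using (h v).1
    · by_cases hw : w ∈ T
      · simpa [hmw, hloopw, hwv, hS, hw] using (h w).1
      · simpa [hmw, hloopw, hwv, hS, hw] using (h w).2
    · rw [← hi i h1 h2]
      exact h i
  · rintro ⟨hv, hw, h⟩ i
    by_cases h1 : i = v
    · subst h1
      simpa [hmv, hloopv, hadj] using hv
    by_cases h2 : i = w
    · subst h2
      by_cases hw' : i ∈ T
      · simpa [hmw, hloopw, hwv, hS, hw'] using hw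
      · simpa [hmw, hloopw, hwv, hS, hw'] using hw
    · rw [hi i h1 h2]
      exact h i h1 h2

theorem sum_erase_congr {V : Type*} [Fintype V] [DecidableEq V] {v w : V} (f x y : V → ZMod 2)
    (h : ∀ j, j ≠ v → j ≠ w → x j = y j) :
    ∑ j ∈ (Finset.univ.erase w).erase v, f j * x j =
      ∑ j ∈ (Finset.univ.erase w).erase v, f j * y j := by
  refine Finset.sum_congr rfl fun j hj => ?_
  simp only [Finset.mem_erase, Finset.mem_univ, and_true] at hj
  rw [h j hj.1 hj.2]

/-! ### Nullities for the four kinds of `T` -/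

/-- Toggling `w` alone is the same as toggling `v` alone: the first system forces `x v = 0`, the
second `x w = 0`, and interchanging these two coordinates matches their solutions. -/
theorem nullity_insert_w {R V : Type*} [Fintype V] [DecidableEq V] (G : WMG R V) {v w : V}
    (hvw : v ≠ w) (hloopv : G.adj v v = 0) (hloopw : G.adj w w = 0)
    (htwin : ∀ x : V, x ≠ v → x ≠ w → G.adj v x = G.adj w x)
    (hmv : v ∉ G.marked) (hmw : w ∈ G.marked) (hadj : G.adj v w = 1)
    (t : Finset V) (hv : v ∉ t) (hw : w ∉ t) :
    G.nullity (insert w t) = G.nullity (insert v t) := by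
  apply Nat.pow_right_injective (le_refl 2)
  change 2 ^ _ = 2 ^ _
  rw [← card_sol, ← card_sol]
  have hs : ∀ x : V → ZMod 2, ∀ j, j ≠ v → j ≠ w → (x ∘ Equiv.swap v w) j = x j := by
    intro x j h1 h2
    rw [Function.comp_apply, Equiv.swap_apply_of_ne_of_ne h1 h2]
  refine Nat.card_congr ((Equiv.arrowCongr (Equiv.swap v w) (Equiv.refl _)).subtypeEquiv ?_)
  intro x
  have he : (Equiv.arrowCongr (Equiv.swap v w) (Equiv.refl (ZMod 2))) x = x ∘ Equiv.swap v w := by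
    ext j; simp [Equiv.arrowCongr]
  rw [he, sol_iff G hvw hloopv hloopw htwin hmv hmw hadj,
    sol_iff G hvw hloopv hloopw htwin hmv hmw hadj]
  simp only [sum_erase_congr _ _ _ (hs x)]
  have hsv : (x ∘ Equiv.swap v w) v = x w := by simp
  have hsw : (x ∘ Equiv.swap v w) w = x v := by simp
  rw [hsv, hsw]
  simp only [Finset.mem_insert, hv, hw, hvw, hvw.symm, or_false, if_true, if_false]
  rw [← and_assoc, ← and_assoc]
  refine and_congr ?_ (forall_congr' fun i => forall_congr' fun h1 => forall_congr' fun h2 => ?_)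
  · generalize ∑ j ∈ (Finset.univ.erase w).erase v, G.adj v j * x j = S
    generalize x v = a
    generalize x w = b
    revert S a b
    decide
  · rw [hs x i h1 h2, add_comm (x w)]
    simp only [h1, h2, false_or]

/-- Toggling both twins makes their rows and columns equal, which adds one dimension to the
kernel: a solution `x` is determined by `x w`, which is arbitrary, and by the solution of the
system for `insert v t` obtained by replacing `(x v, x w)` with `(x v + x w, 0)`. -/
theorem nullity_insert_both {R V : Type*} [Fintype V] [DecidableEq V] (G : WMG R V) {v w : V}
    (hvw : v ≠ w) (hloopv : G.adj v v = 0) (hloopw : G.adj w w = 0)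
    (htwin : ∀ x : V, x ≠ v → x ≠ w → G.adj v x = G.adj w x)
    (hmv : v ∉ G.marked) (hmw : w ∈ G.marked) (hadj : G.adj v w = 1)
    (t : Finset V) (hw : w ∉ t) :
    G.nullity (insert w (insert v t)) = G.nullity (insert v t) + 1 := by
  apply Nat.pow_right_injective (le_refl 2)
  change 2 ^ _ = 2 ^ _
  have h2 : Nat.card (ZMod 2) = 2 := by simp
  rw [pow_succ, ← card_sol, ← card_sol]
  refine Eq.trans ?_ ((Nat.card_prod {x // G.Sol (insert v t) x} (ZMod 2)).trans (by rw [h2]))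
  -- `f x a b` is `x` with the coordinates at `v` and `w` replaced by `a` and `b`.
  let f (x : V → ZMod 2) (a b : ZMod 2) : V → ZMod 2 :=
    fun i => if i = v then a else if i = w then b else x i
  have fv : ∀ x a b, f x a b v = a := fun x a b => if_pos rfl
  have fw : ∀ x a b, f x a b w = b := fun x a b => by simp [f, hvw.symm]
  have fi : ∀ x a b i, i ≠ v → i ≠ w → f x a b i = x i := fun x a b i h1 h2 => by
    simp [f, h1, h2]
  have key : ∀ x a b, a + b = x v + x w →
      (G.Sol (insert w (insert v t)) (f x a b) ↔ G.Sol (insert v t) (f x (x v + x w) 0)) := by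
    intro x a b hab
    rw [sol_iff G hvw hloopv hloopw htwin hmv hmw hadj,
      sol_iff G hvw hloopv hloopw htwin hmv hmw hadj]
    simp only [sum_erase_congr _ _ _ (fi x _ _), fv, fw, ← hab]
    simp only [Finset.mem_insert, hw, hvw, hvw.symm, or_false, if_true, if_false,
      true_or, or_true]
    rw [← and_assoc, ← and_assoc]
    refine and_congr ?_ (forall_congr' fun i => forall_congr' fun h1 => forall_congr' fun h2 => ?_)
    · generalize ∑ j ∈ (Finset.univ.erase w).erase v, G.adj v j * x j = S
      clear hab
      revert S a b
      decide
    · rw [fi _ _ _ i h1 h2, fi _ _ _ i h1 h2, add_zero]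
      simp only [h1, h2, false_or]
  have fself : ∀ x, f x (x v) (x w) = x := by
    intro x
    ext i
    simp only [f]
    split_ifs with h1 h2
    · rw [h1]
    · rw [h2]
    · rfl
  have ff : ∀ x a b a' b', f (f x a b) a' b' = f x a' b' := by
    intro x a b a' b'
    ext i
    simp only [f]
    split_ifs <;> rfl
  have hzero : ∀ y, G.Sol (insert v t) y → y w = 0 := by
    intro y hy
    have := ((sol_iff G hvw hloopv hloopw htwin hmv hmw hadj _ _).1 hy).2.1
    simpa [hw, hvw.symm] using this
  have two : ∀ a b : ZMod 2, a + b + b = a := by decide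
  refine Nat.card_congr
    { toFun := fun x => (⟨f x.1 (x.1 v + x.1 w) 0, ?_⟩, x.1 w)
      invFun := fun p => ⟨f p.1.1 (p.1.1 v + p.2) p.2, ?_⟩
      left_inv := ?_
      right_inv := ?_ }
  · exact (key x.1 (x.1 v) (x.1 w) rfl).1 (by rw [fself]; exact x.2)
  · have h0 := hzero _ p.1.2
    refine (key _ _ _ ?_).2 ?_
    · rw [two, h0, add_zero]
    · have := fself p.1.1
      rw [h0] at this
      rw [h0, add_zero, this]
      exact p.1.2
  · rintro ⟨x, hx⟩
    apply Subtype.ext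
    change f (f x (x v + x w) 0) (f x (x v + x w) 0 v + x w) (x w) = x
    rw [ff, fv, two, fself]
  · rintro ⟨⟨y, hy⟩, c⟩
    have h0 := hzero _ hy
    refine Prod.ext (Subtype.ext ?_) ?_
    · change f (f y (y v + c) c) (f y (y v + c) c v + f y (y v + c) c w) 0 = y
      rw [ff, fv, fw, two]
      have := fself y
      rwa [h0] at this
    · exact fw _ _ _

/-- If `w` is marked, unlooped and not toggled, its row and column are absent from `𝒜(G)_T`, so
`G - w` has the same nullity. -/
theorem nullity_delete {R V : Type*} [Fintype V] [DecidableEq V] (G : WMG R V) {w : V}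
    (hloopw : G.adj w w = 0) (hmw : w ∈ G.marked)
    (G' : WMG R {x : V // x ∉ ({w} : Finset V)})
    (hadj' : G'.adj = (G.delete {w}).adj)
    (hmarked' : ∀ x : {x : V // x ∉ ({w} : Finset V)}, x ∈ G'.marked ↔ (x : V) ∈ G.marked)
    (T : Finset V) (hw : w ∉ T) :
    G'.nullity (T.subtype fun x => x ∉ ({w} : Finset V)) = G.nullity T := by
  have hwk : w ∉ G.keep T := by simp [mem_keep, hmw, hloopw, hw]
  have hk : ∀ x : {x : V // x ∉ ({w} : Finset V)},
      x ∈ G'.keep (T.subtype fun x => x ∉ ({w} : Finset V)) ↔ (x : V) ∈ G.keep T := by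
    intro x
    simp [mem_keep, hmarked', hadj', delete]
  let e : {x // x ∈ G'.keep (T.subtype fun x => x ∉ ({w} : Finset V))} ≃ {x // x ∈ G.keep T} :=
    { toFun := fun x => ⟨x.1.1, (hk _).1 x.2⟩
      invFun := fun x => ⟨⟨x.1, fun h => hwk (Finset.mem_singleton.1 h ▸ x.2)⟩, (hk _).2 x.2⟩
      left_inv := fun _ => rfl
      right_inv := fun _ => rfl }
  unfold nullity
  rw [Fintype.card_congr e]
  congr 1
  rw [← Matrix.rank_submatrix ((G.adjT T).submatrix _ _) e e]
  congr 1
  ext i j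
  simp [adjT, hadj', delete, e, Subtype.ext_iff]

theorem prod_compl_mul_prod {R W : Type*} [CommRing R] [Fintype W] [DecidableEq W] (a b : W → R)
    (T : Finset W) :
    (∏ x ∈ Tᶜ, a x) * (∏ t ∈ T, b t) = ∏ x, if x ∈ T then b x else a x := by
  rw [mul_comm, Finset.prod_ite]
  congr 2 <;> ext <;> simp

end WMG

/-! ### Comparison of the two sums -/

theorem mixed_adjacent_twins {R : Type*} [CommRing R] (d : Rˣ) {V : Type*} [Fintype V] [DecidableEq V]
    (G : WMG R V) (v w : V) (hvw : v ≠ w)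
    (hloopv : G.adj v v = 0) (hloopw : G.adj w w = 0)
    (htwin : ∀ x : V, x ≠ v → x ≠ w → G.adj v x = G.adj w x)
    (hmv : v ∉ G.marked) (hmw : w ∈ G.marked) (hadj : G.adj v w = 1)
    (G' : WMG R {x : V // x ∉ ({w} : Finset V)})
    (hadj' : G'.adj = (G.delete {w}).adj)
    (hphi' : G'.phi = G.phi)
    (hmarked' : ∀ x : {x : V // x ∉ ({w} : Finset V)}, x ∈ G'.marked ↔ (x : V) ∈ G.marked)
    (halpha' : ∀ x : {x : V // x ∉ ({w} : Finset V)}, G'.alpha x =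
        if (x : V) = v then G.alpha v * G.alpha w else G.alpha x)
    (hbeta' : ∀ x : {x : V // x ∉ ({w} : Finset V)}, G'.beta x =
        if (x : V) = v then G.alpha v * G.beta w + G.beta v * G.alpha w + G.beta v * G.beta w * (d : R) else G.beta x) :
    G.bracket d = G'.bracket d := by
  set A : Finset V := (Finset.univ.erase w).erase v with hA
  have hvA : v ∉ A := by simp [hA]
  have hwA : w ∉ insert v A := by simp [hA, hvw.symm]
  have hins : insert v A = Finset.univ.erase w :=
    Finset.insert_erase (Finset.mem_erase.2 ⟨hvw, Finset.mem_univ v⟩)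
  have huniv : (Finset.univ : Finset V) = insert w (insert v A) := by
    rw [hins, Finset.insert_erase (Finset.mem_univ w)]
  -- Subsets of `V(G - w)` are the subsets of `V` avoiding `w`.
  have hsub : ∀ g : Finset {x : V // x ∉ ({w} : Finset V)} → R,
      ∑ T, g T = ∑ T ∈ (insert v A).powerset, g (T.subtype fun x => x ∉ ({w} : Finset V)) := by
    intro g
    refine Finset.sum_nbij' (fun T => T.map (Function.Embedding.subtype _))
      (fun T => T.subtype _) ?_ ?_ ?_ ?_ ?_
    · intro T _
      rw [hins, Finset.mem_powerset]
      intro x hx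
      obtain ⟨y, -, rfl⟩ := Finset.mem_map.1 hx
      have := y.2
      simpa using this
    · intro T _
      exact Finset.mem_univ _
    · intro T _
      ext x
      simpa using fun _ => Finset.notMem_singleton.1 x.2
    · intro T hT
      rw [hins, Finset.mem_powerset] at hT
      rw [Finset.subtype_map]
      refine Finset.filter_true_of_mem fun x hx => ?_
      have := hT hx
      simpa using this
    · intro T _
      congr 1
      ext x
      simpa using fun _ => Finset.notMem_singleton.1 x.2
  have hprod' : ∀ f : V → R, ∏ x : {x : V // x ∉ ({w} : Finset V)}, f x = f v * ∏ x ∈ A, f x := by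
    intro f
    rw [← Finset.prod_insert hvA, hins]
    exact (Finset.prod_subtype _ (by simp) f).symm
  unfold WMG.bracket
  rw [hphi', hsub, ← Finset.powerset_univ, huniv, Finset.sum_powerset_insert hwA,
    Finset.sum_powerset_insert hvA, Finset.sum_powerset_insert hvA,
    Finset.sum_powerset_insert hvA]
  congr 1
  simp only [← Finset.sum_add_distrib]
  refine Finset.sum_congr rfl fun t ht => ?_
  rw [Finset.mem_powerset] at ht
  have hvt : v ∉ t := fun h => hvA (ht h)
  have hwt : w ∉ t := fun h => hwA (Finset.mem_insert_of_mem (ht h))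
  have hwvt : w ∉ insert v t := by simp [hvw.symm, hwt]
  rw [G.nullity_delete hloopw hmw G' hadj' hmarked' t hwt,
    G.nullity_delete hloopw hmw G' hadj' hmarked' _ hwvt,
    G.nullity_insert_both hvw hloopv hloopw htwin hmv hmw hadj t hwt,
    G.nullity_insert_w hvw hloopv hloopw htwin hmv hmw hadj t hvt hwt]
  simp only [WMG.prod_compl_mul_prod, halpha', hbeta', Finset.mem_subtype]
  have hG : ∀ T : Finset V, (∀ x ∈ A, x ∈ T ↔ x ∈ t) →
      (∏ x, if x ∈ T then G.beta x else G.alpha x) =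
        (if w ∈ T then G.beta w else G.alpha w) * ((if v ∈ T then G.beta v else G.alpha v) *
          ∏ x ∈ A, if x ∈ t then G.beta x else G.alpha x) := by
    intro T hT
    rw [huniv, Finset.prod_insert hwA, Finset.prod_insert hvA]
    congr 2
    exact Finset.prod_congr rfl fun x hx => by simp only [hT x hx]
  have hG' : ∀ (T : Finset V) (a b : R), (∀ x ∈ A, x ∈ T ↔ x ∈ t) →
      (∏ x : {x : V // x ∉ ({w} : Finset V)},
        if (x : V) ∈ T then (if (x : V) = v then b else G.beta x)
          else (if (x : V) = v then a else G.alpha x)) =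
        (if v ∈ T then b else a) * ∏ x ∈ A, if x ∈ t then G.beta x else G.alpha x := by
    intro T a b hT
    rw [hprod' fun x => if x ∈ T then (if x = v then b else G.beta x)
          else (if x = v then a else G.alpha x)]
    simp only [if_true]
    congr 1
    refine Finset.prod_congr rfl fun x hx => ?_
    have : x ≠ v := fun h => hvA (h ▸ hx)
    simp only [hT x hx, this, if_false]
  have hAv : ∀ x ∈ A, x ≠ v := fun x hx h => hvA (h ▸ hx)
  have hAw : ∀ x ∈ A, x ≠ w := fun x hx h => hwA (h ▸ Finset.mem_insert_of_mem hx)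
  have e1 : ∀ x ∈ A, x ∈ insert v t ↔ x ∈ t := fun x hx => by simp [hAv x hx]
  have e2 : ∀ x ∈ A, x ∈ insert w t ↔ x ∈ t := fun x hx => by simp [hAw x hx]
  have e3 : ∀ x ∈ A, x ∈ insert w (insert v t) ↔ x ∈ t := fun x hx => by
    simp [hAv x hx, hAw x hx]
  rw [hG t fun _ _ => Iff.rfl, hG _ e1, hG _ e2, hG _ e3, hG' t _ _ fun _ _ => Iff.rfl,
    hG' _ _ _ e1]
  simp only [Finset.mem_insert, hvt, hwt, hvw, hvw.symm, or_false, if_true, if_false, or_true]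
  ring
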